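/- There exists a constant K > 0 depending only on q, r, ρ0, ρ1 (and not on n) such that for every n ≥ 2, with i = ⌊n/2⌋ and 0^n the all-zero sequence: 0 ≤ a²/(c·d) − Pr[Z = 0^n | X_i = 0]/Pr[Z = 0^n | X_i = 1] ≤ K·(λ2/λ1)^{⌊n/2⌋}, where Δ = √((1−q)²(1−ρ0)² − 2(1−q−r−q·r)(1−ρ0)ρ1 + (1−r)²ρ1²), a = (1−q)(1−ρ0) − (1−r)ρ1 + Δ, c = 2rρ1, d = 2r(1−ρ0), λ1 = ((1−q)(1−ρ0) + (1−r)ρ1 + Δ)/2, and λ2 = ((1−q)(1−ρ0) + (1−r)ρ1 − Δ)/2. -/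

import Mathlib

/-!
Write `u = 1 - e0`, `v = e1` for the probabilities of emitting `0`, and `M = P · diag (u, v)`.
Splitting paths at time `i` and using reversibility of the stationary chain, the likelihood
`Pr[Z = 0^n | X_i = s]` equals `B(s, 0) (M^(i-1) 1)_s (M^(n-i) 1)_s` (`likGivenXi_eq`, resting on
`sum_pathWt_at`). Hence the likelihood ratio is `(u / v) R_(i-1) R_(n-i)`, where `R_k` is the ratio
of the coordinates of `M^k 1`.

The eigenvalues of `M` are `λ1 ≥ λ2 > 0`, and its Perron vector has ratio `ξ = a / d ≥ 1`. The left
eigenvectors of `M` show that `0 ≤ ξ - R_k ≤ C (λ2 / λ1)^k` (`ratio_gap`). Since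
`a² / (c d) = (u / v) ξ²`, the gap in question is
`(u / v) (ξ (ξ - R_(i-1)) + R_(i-1) (ξ - R_(n-i)))`, and both exponents are at least `⌊n/2⌋ - 1`.
-/

open Finset
open scoped Classical

noncomputable section

/-- Transition matrix of the binary Markov chain: `P(0,0)=1-q, P(0,1)=q, P(1,0)=r, P(1,1)=1-r`. -/
def mcT (q r : ℝ) : Bool → Bool → ℝ
  | false, false => 1 - q
  | false, true => q
  | true, false => r
  | true, true => 1 - r

/-- Emission (noise) matrix: `B(0,0)=1-e0, B(0,1)=e0, B(1,0)=e1, B(1,1)=1-e1`. -/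
def mcE (e0 e1 : ℝ) : Bool → Bool → ℝ
  | false, false => 1 - e0
  | false, true => e0
  | true, false => e1
  | true, true => 1 - e1

/-- Stationary initial distribution `π = (r/(q+r), q/(q+r))`. -/
def mcInit (q r : ℝ) : Bool → ℝ
  | false => r / (q + r)
  | true => q / (q + r)

/-- `Pr[X = x] = π(x_1) ∏_{t=1}^{n-1} P(x_t, x_{t+1})` for the hidden chain. -/
def priorX (q r : ℝ) (n : ℕ) (x : Fin n → Bool) : ℝ :=
  (if h : 0 < n then mcInit q r (x ⟨0, h⟩) else 1) *
  ∏ t : Fin (n - 1),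
    mcT q r (x ⟨t.1, by have := t.isLt; omega⟩) (x ⟨t.1 + 1, by have := t.isLt; omega⟩)

/-- Probability of a joint event `E` on the hidden sequence `X` and observed sequence `Z`,
under the joint law `Pr[X = x, Z = z] = priorX x · ∏_t B(x_t, z_t)`. -/
def eventPr (q r e0 e1 : ℝ) (n : ℕ)
    (E : (Fin n → Bool) → (Fin n → Bool) → Prop) : ℝ :=
  ∑ x : Fin n → Bool, ∑ z : Fin n → Bool,
    if E x z then priorX q r n x * ∏ t, mcE e0 e1 (x t) (z t) else 0

/-- Conditional probability `Pr[E | F]` under the joint HMM law. -/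
def condPr (q r e0 e1 : ℝ) (n : ℕ)
    (E F : (Fin n → Bool) → (Fin n → Bool) → Prop) : ℝ :=
  eventPr q r e0 e1 n (fun x z => E x z ∧ F x z) / eventPr q r e0 e1 n F

/-- `Pr[Z = z | X_i = v]`. -/
def likGivenXi (q r e0 e1 : ℝ) (n : ℕ) (i : Fin n) (v : Bool) (z : Fin n → Bool) : ℝ :=
  condPr q r e0 e1 n (fun _ z' => z' = z) (fun x _ => x i = v)

/-- Forward quantities: `α_0(x) = 1`,
`α_{t+1}(x) = B(x, z_{t+1}) (α_t(0) P(x,0) + α_t(1) P(x,1))` (1-based `z` index `t+1`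
is the 0-based index `t`). -/
def fwd (q r e0 e1 : ℝ) (n : ℕ) (z : Fin n → Bool) : ℕ → Bool → ℝ
  | 0, _ => 1
  | t + 1, x =>
    if h : t < n then
      mcE e0 e1 x (z ⟨t, h⟩) *
        (fwd q r e0 e1 n z t false * mcT q r x false +
         fwd q r e0 e1 n z t true * mcT q r x true)
    else 1

/-- Backward quantities: `β_n(x) = 1`,
`β_t(x) = β_{t+1}(0) B(0, z_{t+1}) P(x,0) + β_{t+1}(1) B(1, z_{t+1}) P(x,1)`. -/
def bwd (q r e0 e1 : ℝ) (n : ℕ) (z : Fin n → Bool) (t : ℕ) (x : Bool) : ℝ :=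
  if h : t < n then
    bwd q r e0 e1 n z (t + 1) false * mcE e0 e1 false (z ⟨t, h⟩) * mcT q r x false +
    bwd q r e0 e1 n z (t + 1) true * mcE e0 e1 true (z ⟨t, h⟩) * mcT q r x true
  else 1
  termination_by n - t

/-- Backward weights for i.i.d. site weights `w`: `bk k v` is the total weight of all continuations
of length `k` of a path standing at `v`, i.e. the entry at `v` of `(P · diag w)^k 1`. -/
def bk (q r : ℝ) (w : Bool → ℝ) : ℕ → Bool → ℝ
  | 0, _ => 1
  | k + 1, v => mcT q r v false * w false * bk q r w k false +
      mcT q r v true * w true * bk q r w k true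

/-- Weight of a hidden path of length `n + 1` with initial weight `φ` and site weights `w`. -/
def pathWt (q r : ℝ) (w φ : Bool → ℝ) (n : ℕ) (x : Fin (n + 1) → Bool) : ℝ :=
  φ (x 0) * (∏ t : Fin n, mcT q r (x t.castSucc) (x t.succ)) * ∏ t, w (x t)

lemma sum_cons (n : ℕ) (f : (Fin (n + 1) → Bool) → ℝ) :
    ∑ x, f x = ∑ y : Fin n → Bool, (f (Fin.cons true y) + f (Fin.cons false y)) := by
  rw [← (Fin.consEquiv (fun _ : Fin (n + 1) => Bool)).sum_comp, Fintype.sum_prod_type_right]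
  simp [Fin.consEquiv]

lemma pathWt_cons (q r : ℝ) (w φ : Bool → ℝ) (n : ℕ) (s : Bool) (y : Fin (n + 1) → Bool) :
    pathWt q r w φ (n + 1) (Fin.cons s y) =
      pathWt q r w (fun s' => φ s * w s * mcT q r s s') n y := by
  simp only [pathWt, Fin.prod_univ_succ (n := n + 1), Fin.cons_zero, Fin.cons_succ]
  rw [Fin.prod_univ_succ (n := n)]
  simp only [Fin.castSucc_zero, Fin.cons_zero, Fin.cons_succ, ← Fin.succ_castSucc]
  ring

lemma pathWt_add (q r : ℝ) (w φ ψ : Bool → ℝ) (n : ℕ) (x : Fin (n + 1) → Bool) :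
    pathWt q r w φ n x + pathWt q r w ψ n x = pathWt q r w (fun s => φ s + ψ s) n x := by
  simp only [pathWt]; ring

lemma sum_pathWt (q r : ℝ) (w : Bool → ℝ) (n : ℕ) : ∀ φ : Bool → ℝ,
    ∑ x, pathWt q r w φ n x =
      φ false * w false * bk q r w n false + φ true * w true * bk q r w n true := by
  induction n with
  | zero =>
    intro φ
    rw [sum_cons]
    simp [pathWt, bk]
    ring
  | succ n ih =>
    intro φ
    rw [sum_cons]
    simp only [pathWt_cons, pathWt_add]
    rw [ih]
    simp only [bk]
    ring

/-- Forward–backward factorization. Starting from `π · bk k` rather than `π` makes the claim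
inductive in `i`: by reversibility, pushing `π · bk k` one step along the chain gives
`π · bk (k + 1)`. -/
lemma sum_pathWt_at (q r : ℝ) (w : Bool → ℝ) (v : Bool) (i : ℕ) : ∀ (n k : ℕ) (hi : i < n + 1),
    (∑ x : Fin (n + 1) → Bool, if x ⟨i, hi⟩ = v then
        pathWt q r w (fun s => mcInit q r s * bk q r w k s) n x else 0) =
      mcInit q r v * bk q r w (k + i) v * w v * bk q r w (n - i) v := by
  induction i with
  | zero =>
    intro n k hi
    -- The constraint on the first state is absorbed into the initial weight.
    have h : ∀ x : Fin (n + 1) → Bool, (if x ⟨0, hi⟩ = v then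
        pathWt q r w (fun s => mcInit q r s * bk q r w k s) n x else 0) =
        pathWt q r w (fun s => if s = v then mcInit q r s * bk q r w k s else 0) n x := by
      intro x
      by_cases hx : x 0 = v <;> simp [pathWt, hx]
    simp only [h, sum_pathWt]
    cases v <;> simp
  | succ i ih =>
    intro n k hi
    obtain ⟨n, rfl⟩ : ∃ m, n = m + 1 := ⟨n - 1, by omega⟩
    rw [sum_cons]
    have h := ih n (k + 1) (by omega)
    rw [show k + (i + 1) = k + 1 + i by ring, show n + 1 - (i + 1) = n - i by omega, ← h]
    refine Finset.sum_congr rfl fun y _ => ?_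
    have e : ∀ s : Bool, (Fin.cons s y : Fin (n + 1 + 1) → Bool) ⟨i + 1, hi⟩ =
        y ⟨i, by omega⟩ := fun s => rfl
    simp only [e, pathWt_cons]
    split_ifs with hy
    · rw [pathWt_add]
      congr 1
      funext s
      cases s <;> simp only [mcInit, mcT, bk] <;> ring
    · simp

lemma priorX_eq (q r : ℝ) (w : Bool → ℝ) (n : ℕ) (x : Fin (n + 1) → Bool) :
    priorX q r (n + 1) x * ∏ t, w (x t) = pathWt q r w (mcInit q r) n x := by
  simp only [priorX, pathWt, Nat.succ_pos, dif_pos]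
  rfl

lemma bk_one (q r : ℝ) (k : ℕ) (v : Bool) : bk q r (fun _ => 1) k v = 1 := by
  induction k generalizing v with
  | zero => rfl
  | succ k ih => cases v <;> simp [bk, ih, mcT]

lemma eventPr_Xi (q r e0 e1 : ℝ) (n i : ℕ) (hi : i < n + 1) (v : Bool) :
    eventPr q r e0 e1 (n + 1) (fun x _ => x ⟨i, hi⟩ = v) = mcInit q r v := by
  have h := sum_pathWt_at q r (fun _ => 1) v i n 0 hi
  simp only [bk_one, mul_one] at h
  rw [← h]
  refine Finset.sum_congr rfl fun x _ => ?_
  by_cases hx : x ⟨i, hi⟩ = v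
  · simp only [hx, if_true, ← Finset.mul_sum]
    have : ∑ z : Fin (n + 1) → Bool, ∏ t, mcE e0 e1 (x t) (z t) = 1 := by
      rw [← Fintype.piFinset_univ, ← Finset.prod_univ_sum]
      refine Finset.prod_eq_one fun t _ => ?_
      cases x t <;> simp [mcE]
    rw [this, ← priorX_eq]
    simp
  · simp [hx]

lemma eventPr_joint (q r e0 e1 : ℝ) (n i : ℕ) (hi : i < n + 1) (v : Bool) :
    eventPr q r e0 e1 (n + 1) (fun x z => z = (fun _ => false) ∧ x ⟨i, hi⟩ = v) =
      mcInit q r v * bk q r (fun s => mcE e0 e1 s false) i v * mcE e0 e1 v false *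
        bk q r (fun s => mcE e0 e1 s false) (n - i) v := by
  have h := sum_pathWt_at q r (fun s => mcE e0 e1 s false) v i n 0 hi
  simp only [bk, mul_one, zero_add] at h
  rw [← h]
  refine Finset.sum_congr rfl fun x _ => ?_
  by_cases hx : x ⟨i, hi⟩ = v
  · simp only [hx, and_true, if_true]
    rw [Finset.sum_eq_single (fun _ => false)]
    · rw [if_pos rfl]
      exact priorX_eq q r (fun s => mcE e0 e1 s false) n x
    · intro z _ hz
      simp [hz]
    · simp
  · simp [hx]

lemma likGivenXi_eq (q r e0 e1 : ℝ) (hq : 0 < q) (hr : 0 < r) (n : ℕ) (i : Fin n) (v : Bool) :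
    likGivenXi q r e0 e1 n i v (fun _ => false) =
      mcE e0 e1 v false * bk q r (fun s => mcE e0 e1 s false) i v *
        bk q r (fun s => mcE e0 e1 s false) (n - 1 - i) v := by
  obtain ⟨i, hi⟩ := i
  obtain ⟨n, rfl⟩ : ∃ m, n = m + 1 := ⟨n - 1, by omega⟩
  have hv : mcInit q r v ≠ 0 := by cases v <;> simp only [mcInit] <;> positivity
  rw [likGivenXi, condPr, eventPr_Xi, eventPr_joint, div_eq_iff hv]
  simp only [Nat.add_sub_cancel]
  ring

/-- The rate at which the ratio of the two coordinates of `M^k 1` approaches the ratio `ξ` of the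
Perron vector of `M = [[A, B], [C, D]]`. The functional `ξ y - x` is a left eigenvector for `l2`,
and `(l1 - D) x + B y` is a positive left eigenvector for `l1`. -/
lemma ratio_gap (A B C D l1 l2 ξ : ℝ) (x y : ℕ → ℝ)
    (hB : 0 < B) (hC : 0 < C) (hD : 0 < D)
    (hx0 : x 0 = 1) (hy0 : y 0 = 1) (hA : 0 < A)
    (hx : ∀ k, x (k + 1) = A * x k + B * y k) (hy : ∀ k, y (k + 1) = C * x k + D * y k)
    (hξ1 : 1 ≤ ξ) (hl2 : 0 < l2) (hl : l1 = C * ξ + D) (hsum : l1 + l2 = A + D)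
    (hdet : l1 * l2 = A * D - B * C) (k : ℕ) :
    0 < x k ∧ 0 < y k ∧ x k / y k ≤ ξ ∧
      ξ - x k / y k ≤
        (ξ - 1) * ((C * ξ * ξ + B) / (C * ξ + B)) * (l2 / l1) ^ k := by
  have hpos : 0 < x k ∧ 0 < y k := by
    induction k with
    | zero => simp [hx0, hy0]
    | succ k ih => obtain ⟨h1, h2⟩ := ih; rw [hx, hy]; constructor <;> positivity
  have hl1 : 0 < l1 := by rw [hl]; positivity
  have hl2' : l2 = A - C * ξ := by linarith
  have hquad : A * ξ + B = l1 * ξ := by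
    rw [hl2', hl] at hdet
    have : C * (A * ξ + B - (C * ξ + D) * ξ) = 0 := by linarith
    rcases mul_eq_zero.1 this with h | h
    · exact absurd h hC.ne'
    · rw [hl]; linarith
  have hh : ξ * y k - x k = (ξ - 1) * l2 ^ k := by
    clear hpos
    induction k with
    | zero => simp [hx0, hy0]
    | succ k ih =>
      rw [hx, hy, pow_succ, ← mul_assoc, ← ih, hl2']
      rw [hl] at hquad
      linear_combination (-y k) * hquad
  have hg : C * ξ * x k + B * y k = (C * ξ + B) * l1 ^ k := by
    clear hpos hh
    induction k with
    | zero => simp [hx0, hy0]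
    | succ k ih =>
      rw [hx, hy, pow_succ, ← mul_assoc, ← ih, hl]
      rw [hl] at hquad
      linear_combination (C * x k) * hquad
  obtain ⟨hxp, hyp⟩ := hpos
  have hξ0 : 0 < ξ := by linarith
  have hle : x k ≤ ξ * y k := by
    have : 0 ≤ (ξ - 1) * l2 ^ k := mul_nonneg (by linarith) (by positivity)
    linarith
  have hgap : ξ - x k / y k = (ξ - 1) * l2 ^ k / y k := by
    rw [← hh]; field_simp
  refine ⟨hxp, hyp, (div_le_iff₀ hyp).2 hle, ?_⟩
  have hylow : (C * ξ + B) * l1 ^ k ≤ (C * ξ * ξ + B) * y k := by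
    rw [← hg]
    have := mul_le_mul_of_nonneg_left hle (show 0 ≤ C * ξ by positivity)
    linarith
  rw [hgap, div_le_iff₀ hyp]
  have e : (ξ - 1) * ((C * ξ * ξ + B) / (C * ξ + B)) * (l2 / l1) ^ k * y k =
      (ξ - 1) * l2 ^ k * (((C * ξ * ξ + B) * y k) / ((C * ξ + B) * l1 ^ k)) := by
    rw [div_pow]; field_simp
  rw [e]
  refine le_mul_of_one_le_right (mul_nonneg (by linarith) (by positivity)) ?_
  rw [le_div_iff₀ (by positivity)]
  linarith

/-- Tightness at `i = ⌊n/2⌋`: the gap between `a²/(cd)` and the likelihood ratio at the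
all-zero sequence is nonnegative and at most `K (λ2/λ1)^⌊n/2⌋` for a constant `K`
independent of `n`.  The 1-based index `⌊n/2⌋` is the 0-based index `n/2 - 1`. -/
theorem stmt14 (q r e0 e1 : ℝ)
    (hq0 : 0 < q) (hq1 : q < 1/2) (hr0 : 0 < r) (hr1 : r < 1/2)
    (he00 : 0 < e0) (he01 : e0 < 1/2) (he10 : 0 < e1) (he11 : e1 < 1/2)
    (Δ a c d l1 l2 : ℝ)
    (hΔ : Δ = Real.sqrt ((1-q)^2*(1-e0)^2 - 2*(1-q-r-q*r)*(1-e0)*e1 + (1-r)^2*e1^2))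
    (ha : a = (1-q)*(1-e0) - (1-r)*e1 + Δ)
    (hc : c = 2*r*e1) (hd : d = 2*r*(1-e0))
    (hl1 : l1 = ((1-q)*(1-e0) + (1-r)*e1 + Δ)/2)
    (hl2 : l2 = ((1-q)*(1-e0) + (1-r)*e1 - Δ)/2) :
    ∃ K : ℝ, 0 < K ∧ ∀ n : ℕ, ∀ hn2 : 2 ≤ n,
      0 ≤ a^2/(c*d) -
          likGivenXi q r e0 e1 n ⟨n/2 - 1, by omega⟩ false (fun _ => false) /
          likGivenXi q r e0 e1 n ⟨n/2 - 1, by omega⟩ true (fun _ => false) ∧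
      a^2/(c*d) -
          likGivenXi q r e0 e1 n ⟨n/2 - 1, by omega⟩ false (fun _ => false) /
          likGivenXi q r e0 e1 n ⟨n/2 - 1, by omega⟩ true (fun _ => false)
        ≤ K * (l2/l1)^(n/2) := by
  -- `u` and `e1` are the probabilities of emitting `0` from the two hidden states.
  obtain ⟨u, hu⟩ : ∃ u, u = 1 - e0 := ⟨_, rfl⟩
  have hu0 : 1/2 < u := by linarith
  have hup : 0 < u := by linarith
  rw [← hu] at hΔ ha hd hl1 hl2
  have hqr : 0 < 1 - q - r := by linarith
  have hdisc : (1-q)^2*u^2 - 2*(1-q-r-q*r)*u*e1 + (1-r)^2*e1^2 =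
      ((1-q)*u - (1-r)*e1)^2 + 4*q*r*u*e1 := by ring
  have hΔ0 : 0 ≤ Δ := hΔ ▸ Real.sqrt_nonneg _
  have hΔ2 : Δ^2 = ((1-q)*u - (1-r)*e1)^2 + 4*q*r*u*e1 := by
    rw [hΔ, Real.sq_sqrt, hdisc]
    rw [hdisc]; positivity
  have hdet : l1 * l2 = (1-q)*u * ((1-r)*e1) - q*e1 * (r*u) := by
    rw [hl1, hl2]; linear_combination (-1/4) * hΔ2
  have hsum : l1 + l2 = (1-q)*u + (1-r)*e1 := by rw [hl1, hl2]; ring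
  have h1q : 0 < 1 - q := by linarith
  have h1r : 0 < 1 - r := by linarith
  have hl1p : 0 < l1 := by
    rw [hl1]; positivity
  have hl2p : 0 < l2 := by
    have : 0 < l1 * l2 := by
      rw [hdet]
      have : 0 < u * e1 * (1 - q - r) := by positivity
      linarith
    exact (pos_iff_pos_of_mul_pos this).1 hl1p
  have hl21 : l2 ≤ l1 := by rw [hl1, hl2]; linarith
  obtain ⟨ξ, hξ⟩ : ∃ ξ, ξ = a / d := ⟨_, rfl⟩
  have hl : l1 = r*u * ξ + (1-r)*e1 := by
    rw [hξ, hd, ha, hl1]; field_simp; ring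
  -- The Perron ratio is at least `1`: `Δ ≥ 2ru - ((1-q)u - (1-r)e1)`.
  have hξ1 : 1 ≤ ξ := by
    rw [hξ, hd, ha, le_div_iff₀ (by positivity)]
    have hk : 0 ≤ (u - e1) * (1 - q - r) := mul_nonneg (by linarith) hqr.le
    have : 2*r*u - ((1-q)*u - (1-r)*e1) ≤ Δ := by
      refine (le_abs_self _).trans (abs_le_of_sq_le_sq ?_ hΔ0)
      rw [hΔ2]
      have : 0 ≤ 4 * (r * u) * ((u - e1) * (1 - q - r)) := by positivity
      nlinarith
    linarith
  obtain ⟨C, hC⟩ : ∃ C, C = (ξ - 1) * ((r*u * ξ * ξ + q*e1) / (r*u * ξ + q*e1)) := ⟨_, rfl⟩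
  have hgap := ratio_gap ((1-q)*u) (q*e1) (r*u) ((1-r)*e1) l1 l2 ξ
    (fun k => bk q r (fun s => mcE e0 e1 s false) k false)
    (fun k => bk q r (fun s => mcE e0 e1 s false) k true)
    (by positivity) (by positivity) (by positivity) rfl rfl (by positivity)
    (fun k => by simp only [bk, mcT, mcE, hu]) (fun k => by simp only [bk, mcT, mcE, hu])
    hξ1 hl2p hl hsum hdet
  simp only [← hC] at hgap
  have hC0 : 0 ≤ C := by
    have : 0 < ξ := by linarith
    rw [hC]; exact mul_nonneg (by linarith) (by positivity)
  have hlim : a^2/(c*d) = u / e1 * ξ^2 := by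
    rw [hξ, hc, hd]; field_simp
  have hξp : 0 < ξ := by linarith
  obtain ⟨ρ, hρ⟩ : ∃ ρ, ρ = l2 / l1 := ⟨_, rfl⟩
  have hρ0 : 0 < ρ := by rw [hρ]; positivity
  have hρ1 : ρ ≤ 1 := by rw [hρ]; exact (div_le_one hl1p).2 hl21
  rw [← hρ]
  simp only [← hρ] at hgap
  refine ⟨u / e1 * (ξ * C * (1 / ρ + 1)) + 1, by positivity, fun n hn2 => ?_⟩
  rw [likGivenXi_eq q r e0 e1 hq0 hr0, likGivenXi_eq q r e0 e1 hq0 hr0, hlim]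
  obtain ⟨hx1, hy1, hle1, hg1⟩ := hgap (n/2 - 1)
  obtain ⟨hx2, hy2, hle2, hg2⟩ := hgap (n - 1 - (n/2 - 1))
  simp only [mcE, ← hu] at *
  set x1 := bk q r _ (n/2 - 1) false
  set y1 := bk q r _ (n/2 - 1) true
  set x2 := bk q r _ (n - 1 - (n/2 - 1)) false
  set y2 := bk q r _ (n - 1 - (n/2 - 1)) true
  have hratio : u * x1 * x2 / (e1 * y1 * y2) = u / e1 * (x1 / y1 * (x2 / y2)) := by
    field_simp
  rw [hratio, ← mul_sub]
  have hR1 : 0 < x1 / y1 := by positivity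
  have hR2 : 0 < x2 / y2 := by positivity
  have hp1 : ρ ^ (n/2 - 1) = 1 / ρ * ρ ^ (n/2) := by
    obtain ⟨m, hm⟩ : ∃ m, n/2 = m + 1 := ⟨n/2 - 1, by omega⟩
    rw [hm, Nat.add_sub_cancel, pow_succ]; field_simp
  have hp2 : ρ ^ (n - 1 - (n/2 - 1)) ≤ ρ ^ (n/2) :=
    pow_le_pow_of_le_one hρ0.le hρ1 (by omega)
  rw [hp1] at hg1
  have hg2' : ξ - x2 / y2 ≤ C * ρ ^ (n/2) :=
    hg2.trans (mul_le_mul_of_nonneg_left hp2 hC0)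
  have hue : 0 < u / e1 := by positivity
  have hsplit : ξ^2 - x1 / y1 * (x2 / y2) =
      ξ * (ξ - x1 / y1) + x1 / y1 * (ξ - x2 / y2) := by ring
  rw [hsplit]
  constructor
  · refine mul_nonneg hue.le (add_nonneg (mul_nonneg hξp.le (by linarith))
      (mul_nonneg hR1.le (by linarith)))
  · have b1 : ξ * (ξ - x1 / y1) ≤ ξ * (C * (1 / ρ * ρ ^ (n/2))) :=
      mul_le_mul_of_nonneg_left hg1 hξp.le
    have b2 : x1 / y1 * (ξ - x2 / y2) ≤ ξ * (C * ρ ^ (n/2)) :=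
      mul_le_mul hle1 hg2' (by linarith) hξp.le
    have b3 := mul_le_mul_of_nonneg_left (add_le_add b1 b2) hue.le
    have b4 : 0 < ρ ^ (n/2) := by positivity
    refine b3.trans ?_
    rw [add_mul, one_mul]
    refine le_of_eq_of_le ?_ (le_add_of_nonneg_right b4.le)
    ring

end
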